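/- arXiv:2507.14067 — 5 statements merged into one kernel-verified Lean document; each statement's English description precedes it below -/
import Mathlib

section
/- Let V be a nonempty finite type, p a probability vector on V, G ⊆ V, δ ≥ 0, and let w be the watermarked distribution with green list G and intensity δ. Then the green-list mass satisfies w(G) = exp(δ)·p(G) / (1 + (exp(δ)-1)·p(G)) and w(G) ≥ p(G); moreover the inequality is strict whenever δ > 0 and 0 < p(G) < 1. -/
/-!
With `g = p(G)`, `c = exp δ` and `Z = 1 + (c - 1) g`, the green mass grows by exactly
`c g / Z - g = (c - 1) g (1 - g) / Z`, so the sign of the gain can be read off factor by factor.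
-/

section ReweightedMass

theorem one_add_sub_one_mul_pos {R : Type*} [Ring R] [PartialOrder R] [IsStrictOrderedRing R]
    {c g : R} (hc : 1 ≤ c) (hg : 0 ≤ g) : 0 < 1 + (c - 1) * g :=
  add_pos_of_pos_of_nonneg one_pos (mul_nonneg (sub_nonneg.2 hc) hg)

variable {K : Type*} [Field K]

theorem mul_div_one_add_sub_one_mul_sub_self {c g : K} (hZ : 1 + (c - 1) * g ≠ 0) :
    c * g / (1 + (c - 1) * g) - g = (c - 1) * g * (1 - g) / (1 + (c - 1) * g) := by
  rw [div_sub' hZ]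
  ring

variable [LinearOrder K] [IsStrictOrderedRing K] {c g : K}

theorem le_mul_div_one_add_sub_one_mul (hc : 1 ≤ c) (hg0 : 0 ≤ g) (hg1 : g ≤ 1) :
    g ≤ c * g / (1 + (c - 1) * g) := by
  have hZ : 0 < 1 + (c - 1) * g := one_add_sub_one_mul_pos hc hg0
  rw [← sub_nonneg, mul_div_one_add_sub_one_mul_sub_self hZ.ne']
  exact div_nonneg (mul_nonneg (mul_nonneg (sub_nonneg.2 hc) hg0) (sub_nonneg.2 hg1)) hZ.le

theorem lt_mul_div_one_add_sub_one_mul (hc : 1 < c) (hg0 : 0 < g) (hg1 : g < 1) :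
    g < c * g / (1 + (c - 1) * g) := by
  have hZ : 0 < 1 + (c - 1) * g := one_add_sub_one_mul_pos hc.le hg0.le
  rw [← sub_pos, mul_div_one_add_sub_one_mul_sub_self hZ.ne']
  exact div_pos (mul_pos (mul_pos (sub_pos.2 hc) hg0) (sub_pos.2 hg1)) hZ

end ReweightedMass

section Watermark

variable {V R K : Type*} [Fintype V] [DecidableEq V] [CommRing R] [Field K]

/-- The normalizing constant `D` of the watermarked distribution with green list `G`, with the
factor `exp δ` replaced by an arbitrary scalar `c`. -/
def watermarkNormalizer (c : R) (p : V → R) (G : Finset V) : R :=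
  ∑ k ∈ G, c * p k + ∑ k ∈ Gᶜ, p k

theorem watermarkNormalizer_eq (c : R) {p : V → R} (hp : ∑ k, p k = 1) (G : Finset V) :
    watermarkNormalizer c p G = 1 + (c - 1) * ∑ k ∈ G, p k := by
  have hsum : ∑ k ∈ G, p k + ∑ k ∈ Gᶜ, p k = 1 := (Finset.sum_add_sum_compl G p).trans hp
  rw [watermarkNormalizer, ← Finset.mul_sum]
  linear_combination hsum

/-- The watermarked distribution: `p` with its weights on the green list `G` multiplied by `c`
(`exp δ` for a watermark of intensity `δ`), renormalized. It is identically zero when the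
normalizing constant vanishes. -/
def watermark (c : K) (p : V → K) (G : Finset V) (k : V) : K :=
  if k ∈ G then c * p k / watermarkNormalizer c p G else p k / watermarkNormalizer c p G

theorem sum_watermark_greenList (c : K) {p : V → K} (hp : ∑ k, p k = 1) (G : Finset V) :
    ∑ k ∈ G, watermark c p G k = c * (∑ k ∈ G, p k) / (1 + (c - 1) * ∑ k ∈ G, p k) := by
  rw [← watermarkNormalizer_eq c hp, Finset.mul_sum, Finset.sum_div]
  exact Finset.sum_congr rfl fun k hk => if_pos hk

theorem watermark_green_mass_general [LinearOrder K] [IsStrictOrderedRing K]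
    {c : K} (hc : 1 ≤ c) {p : V → K} (hp : ∑ k, p k = 1) {G : Finset V}
    (hG0 : 0 ≤ ∑ k ∈ G, p k) (hG1 : ∑ k ∈ G, p k ≤ 1) :
    (∑ k ∈ G, watermark c p G k
      = c * (∑ k ∈ G, p k) / (1 + (c - 1) * ∑ k ∈ G, p k)) ∧
    (∑ k ∈ G, p k ≤ ∑ k ∈ G, watermark c p G k) ∧
    (1 < c → 0 < ∑ k ∈ G, p k → ∑ k ∈ G, p k < 1 →
      ∑ k ∈ G, p k < ∑ k ∈ G, watermark c p G k) := by
  rw [sum_watermark_greenList c hp]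
  exact ⟨rfl, le_mul_div_one_add_sub_one_mul hc hG0 hG1, lt_mul_div_one_add_sub_one_mul⟩

end Watermark

/-- Green-list mass of the watermarked distribution:
`w(G) = exp δ · p(G) / (1 + (exp δ - 1) · p(G))`, `w(G) ≥ p(G)`, with strict
inequality when `δ > 0` and `0 < p(G) < 1`. -/
theorem watermark_green_mass (V : Type*) [Fintype V] [DecidableEq V] [Nonempty V]
    (p : V → ℝ) (hp0 : ∀ k, 0 ≤ p k) (hp1 : ∑ k, p k = 1)
    (G : Finset V) (δ : ℝ) (hδ : 0 ≤ δ)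
    (D : ℝ) (hD : D = ∑ k ∈ G, Real.exp δ * p k + ∑ k ∈ Gᶜ, p k)
    (w : V → ℝ)
    (hw : ∀ k, w k = if k ∈ G then Real.exp δ * p k / D else p k / D) :
    (∑ k ∈ G, w k
      = Real.exp δ * (∑ k ∈ G, p k) / (1 + (Real.exp δ - 1) * ∑ k ∈ G, p k)) ∧
    (∑ k ∈ G, p k ≤ ∑ k ∈ G, w k) ∧
    (0 < δ → 0 < ∑ k ∈ G, p k → ∑ k ∈ G, p k < 1 →
      ∑ k ∈ G, p k < ∑ k ∈ G, w k) := by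
  obtain rfl : w = watermark (Real.exp δ) p G := funext fun k => by rw [hw, hD]; rfl
  simpa only [Real.one_lt_exp_iff] using watermark_green_mass_general (Real.one_le_exp hδ) hp1
    (Finset.sum_nonneg fun k _ => hp0 k) (hp1 ▸ Finset.sum_le_univ_sum_of_nonneg hp0)
end

section
/- Let V be a nonempty finite type, p a probability vector on V, G ⊆ V, δ ∈ ℝ, and let w be the watermarked distribution with green list G and intensity δ. Then the increase of the green-list mass satisfies the exact identity w(G) - p(G) = p(G)·(1 - p(G))·(exp(δ) - 1) / (1 + (exp(δ)-1)·p(G)). -/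
section

variable {V K : Type*}

lemma sum_mul_add_sum_compl_pos [Fintype V] [DecidableEq V]
    [Semiring K] [PartialOrder K] [IsStrictOrderedRing K]
    {p : V → K} (hp0 : ∀ k, 0 ≤ p k) (hp : 0 < ∑ k, p k) (G : Finset V) {a : K} (ha : 0 < a) :
    0 < ∑ k ∈ G, a * p k + ∑ k ∈ Gᶜ, p k := by
  have hG : 0 ≤ ∑ k ∈ G, p k := Finset.sum_nonneg fun k _ ↦ hp0 k
  have hGc : 0 ≤ ∑ k ∈ Gᶜ, p k := Finset.sum_nonneg fun k _ ↦ hp0 k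
  rw [← Finset.sum_add_sum_compl G] at hp
  rw [← Finset.mul_sum]
  rcases hG.eq_or_lt with hG_zero | hG_pos
  · simpa [← hG_zero] using hp
  · exact add_pos_of_pos_of_nonneg (mul_pos ha hG_pos) hGc

lemma mul_div_one_add_mul_sub_self [Field K] {a g : K} (h : 1 + (a - 1) * g ≠ 0) :
    a * g / (1 + (a - 1) * g) - g = g * (1 - g) * (a - 1) / (1 + (a - 1) * g) := by
  rw [div_sub' h]
  ring

variable [Field K] [TopologicalSpace K] [IsTopologicalRing K] [T2Space K]

lemma tsum_mul_add_tsum_compl_of_tsum_eq_one {p : V → K} {G : Set V}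
    (hG : Summable fun k : G ↦ p k) (hGc : Summable fun k : ↥Gᶜ ↦ p k)
    (hp1 : ∑' k, p k = 1) (a : K) :
    ∑' k : G, a * p k + ∑' k : ↥Gᶜ, p k = 1 + (a - 1) * ∑' k : G, p k := by
  have hsplit : ∑' k : G, p k + ∑' k : ↥Gᶜ, p k = 1 := (hG.tsum_add_tsum_compl hGc).trans hp1
  rw [tsum_mul_left]
  linear_combination hsplit

/-- The scalar `a` stands for `exp δ`. The discrete topology on `K` gives the case of finite `V`
over an arbitrary field. -/
theorem watermark_green_mass_increase_general {p : V → K} {G : Set V} [DecidablePred (· ∈ G)]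
    (hG : Summable fun k : G ↦ p k) (hGc : Summable fun k : ↥Gᶜ ↦ p k)
    (hp1 : ∑' k, p k = 1) {a D : K} (hD : D = ∑' k : G, a * p k + ∑' k : ↥Gᶜ, p k) (hD0 : D ≠ 0)
    {w : V → K} (hw : ∀ k, w k = if k ∈ G then a * p k / D else p k / D) :
    ∑' k : G, w k - ∑' k : G, p k
      = (∑' k : G, p k) * (1 - ∑' k : G, p k) * (a - 1) / (1 + (a - 1) * ∑' k : G, p k) := by
  have hw_green : ∑' k : G, w k = a * (∑' k : G, p k) / D := by
    simp only [hw, Subtype.coe_prop, if_true, tsum_div_const, tsum_mul_left]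
  rw [tsum_mul_add_tsum_compl_of_tsum_eq_one hG hGc hp1] at hD
  rw [hw_green, hD, mul_div_one_add_mul_sub_self (hD ▸ hD0)]

end

/-- Exact identity for the increase of green-list mass under watermarking:
`w(G) - p(G) = p(G)·(1 - p(G))·(exp δ - 1) / (1 + (exp δ - 1)·p(G))`. -/
theorem watermark_green_mass_increase (V : Type*) [Fintype V] [DecidableEq V] [Nonempty V]
    (p : V → ℝ) (hp0 : ∀ k, 0 ≤ p k) (hp1 : ∑ k, p k = 1)
    (G : Finset V) (δ : ℝ)
    (D : ℝ) (hD : D = ∑ k ∈ G, Real.exp δ * p k + ∑ k ∈ Gᶜ, p k)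
    (w : V → ℝ)
    (hw : ∀ k, w k = if k ∈ G then Real.exp δ * p k / D else p k / D) :
    ∑ k ∈ G, w k - ∑ k ∈ G, p k
      = (∑ k ∈ G, p k) * (1 - ∑ k ∈ G, p k) * (Real.exp δ - 1)
          / (1 + (Real.exp δ - 1) * ∑ k ∈ G, p k) := by
  have hD0 : D ≠ 0 := hD ▸ (sum_mul_add_sum_compl_pos hp0 (hp1 ▸ one_pos) G (Real.exp_pos δ)).ne'
  rw [← Finset.tsum_subtype' G (Real.exp δ * p ·), ← Finset.tsum_subtype' Gᶜ p,
    Finset.coe_compl] at hD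
  simpa only [Finset.tsum_subtype'] using
    watermark_green_mass_increase_general .of_finite .of_finite (by rwa [tsum_fintype]) hD hD0 hw
end

section
/- Let V be a nonempty finite type, p a probability vector on V with p k > 0 for all k, G ⊆ V, δ ≥ 0, γ ∈ ℝ with p(G) ≤ γ, and let w be the watermarked distribution with green list G and intensity δ. Then the Kullback–Leibler divergence between the watermarked and the original distribution is bounded by D_KL(w ‖ p) ≤ δ · p(G) · (exp(δ) - 1) ≤ δ · γ · (exp(δ) - 1). -/
/-! Watermarking is the exponential tilting `w ∝ p · exp f` with `f = δ · 1_G`. For every tilting,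
`D_KL(w ‖ p) = E_w f - log E_p (exp f)`, and Jensen's inequality bounds this by `E_w f - E_p f`,
which for `f = δ · 1_G` is `δ · (w(G) - p(G)) = δ · p(G) · (exp δ / D - 1)`. Since `D - 1` has the
sign of `δ`, replacing `exp δ / D` by `exp δ` can only increase the bound. -/

open Real

lemma mul_exp_sub_one_nonneg (x : ℝ) : 0 ≤ x * (exp x - 1) := by
  rcases le_total 0 x with hx | hx
  · exact mul_nonneg hx (sub_nonneg.2 (one_le_exp hx))
  · exact mul_nonneg_of_nonpos_of_nonpos hx (sub_nonpos.2 (exp_le_one_iff.2 hx))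

section ExpTilt

variable {V : Type*} [Fintype V]

/-- The exponential tilting (Gibbs reweighting) of the weights `p` by the function `f`, the analogue
for finite weight vectors of `MeasureTheory.Measure.tilted`. -/
noncomputable def expTilt (p f : V → ℝ) (k : V) : ℝ :=
  p k * exp (f k) / ∑ j, p j * exp (f j)

variable {p : V → ℝ}

lemma exp_sum_mul_le_sum_mul_exp (hp0 : ∀ k, 0 ≤ p k) (hp1 : ∑ k, p k = 1) (f : V → ℝ) :
    exp (∑ k, p k * f k) ≤ ∑ k, p k * exp (f k) :=
  convexOn_exp.map_sum_le (fun k _ => hp0 k) hp1 fun k _ => Set.mem_univ (f k)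

lemma sum_mul_exp_pos (hp0 : ∀ k, 0 ≤ p k) (hp1 : ∑ k, p k = 1) (f : V → ℝ) :
    0 < ∑ k, p k * exp (f k) :=
  (exp_pos _).trans_le (exp_sum_mul_le_sum_mul_exp hp0 hp1 f)

lemma sum_mul_le_log_sum_mul_exp (hp0 : ∀ k, 0 ≤ p k) (hp1 : ∑ k, p k = 1) (f : V → ℝ) :
    ∑ k, p k * f k ≤ log (∑ k, p k * exp (f k)) :=
  (le_log_iff_exp_le (sum_mul_exp_pos hp0 hp1 f)).2 (exp_sum_mul_le_sum_mul_exp hp0 hp1 f)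

lemma sum_expTilt {f : V → ℝ} (hZ : ∑ k, p k * exp (f k) ≠ 0) : ∑ k, expTilt p f k = 1 := by
  simp only [expTilt]
  rw [← Finset.sum_div, div_self hZ]

lemma expTilt_mul_log_div {f : V → ℝ} (hZ : ∑ k, p k * exp (f k) ≠ 0) (k : V) :
    expTilt p f k * log (expTilt p f k / p k) =
      expTilt p f k * (f k - log (∑ j, p j * exp (f j))) := by
  by_cases hk : p k = 0
  · simp [expTilt, hk]
  · have hratio : expTilt p f k / p k = exp (f k) / ∑ j, p j * exp (f j) := by
      rw [expTilt, div_right_comm, mul_div_cancel_left₀ _ hk]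
    rw [hratio, log_div (exp_ne_zero _) hZ, log_exp]

lemma sum_expTilt_mul_log_div {f : V → ℝ} (hZ : ∑ k, p k * exp (f k) ≠ 0) :
    ∑ k, expTilt p f k * log (expTilt p f k / p k) =
      ∑ k, expTilt p f k * f k - log (∑ k, p k * exp (f k)) := by
  simp only [expTilt_mul_log_div hZ, mul_sub]
  rw [Finset.sum_sub_distrib, ← Finset.sum_mul, sum_expTilt hZ, one_mul]

lemma sum_expTilt_mul_log_div_le (hp0 : ∀ k, 0 ≤ p k) (hp1 : ∑ k, p k = 1) (f : V → ℝ) :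
    ∑ k, expTilt p f k * log (expTilt p f k / p k) ≤
      ∑ k, expTilt p f k * f k - ∑ k, p k * f k := by
  rw [sum_expTilt_mul_log_div (sum_mul_exp_pos hp0 hp1 f).ne']
  exact sub_le_sub_left (sum_mul_le_log_sum_mul_exp hp0 hp1 f) _

variable [DecidableEq V]

lemma sum_mul_exp_ite (hp1 : ∑ k, p k = 1) (G : Finset V) (δ : ℝ) :
    ∑ k, p k * exp (if k ∈ G then δ else 0) = 1 + (exp δ - 1) * ∑ k ∈ G, p k := by
  have hterm (k : V) : p k * exp (if k ∈ G then δ else 0) =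
      p k + (exp δ - 1) * if k ∈ G then p k else 0 := by
    split_ifs
    · ring
    · simp
  simp only [hterm]
  rw [Finset.sum_add_distrib, ← Finset.mul_sum, Finset.sum_ite_mem, Finset.univ_inter, hp1]

lemma expTilt_ite (hp1 : ∑ k, p k = 1) (G : Finset V) (δ : ℝ) (k : V) :
    expTilt p (fun j => if j ∈ G then δ else 0) k =
      if k ∈ G then exp δ * p k / (1 + (exp δ - 1) * ∑ j ∈ G, p j)
      else p k / (1 + (exp δ - 1) * ∑ j ∈ G, p j) := by
  rw [expTilt, sum_mul_exp_ite hp1]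
  split_ifs
  · rw [mul_comm]
  · rw [exp_zero, mul_one]

lemma sum_expTilt_ite (hp1 : ∑ k, p k = 1) (G : Finset V) (δ : ℝ) :
    ∑ k ∈ G, expTilt p (fun j => if j ∈ G then δ else 0) k =
      exp δ * (∑ k ∈ G, p k) / (1 + (exp δ - 1) * ∑ k ∈ G, p k) := by
  rw [Finset.mul_sum, Finset.sum_div]
  exact Finset.sum_congr rfl fun k hk => by rw [expTilt_ite hp1, if_pos hk]

lemma sum_expTilt_ite_mul_log_div_le (hp0 : ∀ k, 0 ≤ p k) (hp1 : ∑ k, p k = 1)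
    (G : Finset V) (δ : ℝ) :
    ∑ k, expTilt p (fun j => if j ∈ G then δ else 0) k *
        log (expTilt p (fun j => if j ∈ G then δ else 0) k / p k) ≤
      δ * (∑ k ∈ G, p k) * (exp δ / (1 + (exp δ - 1) * ∑ k ∈ G, p k) - 1) := by
  have hmean (q : V → ℝ) : ∑ k, q k * (if k ∈ G then δ else 0) = (∑ k ∈ G, q k) * δ := by
    simp only [mul_ite, mul_zero]
    rw [Finset.sum_ite_mem, Finset.univ_inter, Finset.sum_mul]
  refine (sum_expTilt_mul_log_div_le hp0 hp1 _).trans_eq ?_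
  rw [hmean, hmean, sum_expTilt_ite hp1]
  ring

end ExpTilt

lemma mul_exp_div_le_mul_exp {δ P : ℝ} (hP : 0 ≤ P) (hD : 0 < 1 + (exp δ - 1) * P) :
    δ * (exp δ / (1 + (exp δ - 1) * P)) ≤ δ * exp δ := by
  rw [← mul_div_assoc, div_le_iff₀ hD]
  have hgap : 0 ≤ exp δ * P * (δ * (exp δ - 1)) :=
    mul_nonneg (mul_nonneg (exp_pos δ).le hP) (mul_exp_sub_one_nonneg δ)
  linarith

theorem watermark_kl_bound_general {V : Type*} [Fintype V] [DecidableEq V]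
    {p : V → ℝ} (hp0 : ∀ k, 0 ≤ p k) (hp1 : ∑ k, p k = 1) {G : Finset V} {δ γ : ℝ}
    (hγ : ∑ k ∈ G, p k ≤ γ) {D : ℝ} (hD : D = 1 + (exp δ - 1) * ∑ k ∈ G, p k)
    {w : V → ℝ} (hw : ∀ k, w k = if k ∈ G then exp δ * p k / D else p k / D) :
    ∑ k, w k * log (w k / p k) ≤ δ * (∑ k ∈ G, p k) * (exp δ - 1) ∧
    δ * (∑ k ∈ G, p k) * (exp δ - 1) ≤ δ * γ * (exp δ - 1) := by
  subst hD
  obtain rfl : w = expTilt p fun k => if k ∈ G then δ else 0 :=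
    funext fun k => (hw k).trans (expTilt_ite hp1 G δ k).symm
  have hP : 0 ≤ ∑ k ∈ G, p k := Finset.sum_nonneg fun k _ => hp0 k
  have hD : 0 < 1 + (exp δ - 1) * ∑ k ∈ G, p k :=
    sum_mul_exp_ite hp1 G δ ▸ sum_mul_exp_pos hp0 hp1 _
  constructor
  · refine (sum_expTilt_ite_mul_log_div_le hp0 hp1 G δ).trans ?_
    linarith [mul_le_mul_of_nonneg_left (mul_exp_div_le_mul_exp hP hD) hP]
  · linarith [mul_le_mul_of_nonneg_right hγ (mul_exp_sub_one_nonneg δ)]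

/-- Bound on the KL divergence of the watermarked distribution from the
original: `D_KL(w ‖ p) ≤ δ·p(G)·(exp δ - 1) ≤ δ·γ·(exp δ - 1)`. -/
theorem watermark_kl_bound (V : Type*) [Fintype V] [DecidableEq V] [Nonempty V]
    (p : V → ℝ) (hp0 : ∀ k, 0 < p k) (hp1 : ∑ k, p k = 1)
    (G : Finset V) (δ : ℝ) (hδ : 0 ≤ δ)
    (γ : ℝ) (hγ : ∑ k ∈ G, p k ≤ γ)
    (D : ℝ) (hD : D = 1 + (Real.exp δ - 1) * ∑ k ∈ G, p k)
    (w : V → ℝ)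
    (hw : ∀ k, w k = if k ∈ G then Real.exp δ * p k / D else p k / D) :
    ∑ k, w k * Real.log (w k / p k) ≤ δ * (∑ k ∈ G, p k) * (Real.exp δ - 1) ∧
    δ * (∑ k ∈ G, p k) * (Real.exp δ - 1) ≤ δ * γ * (Real.exp δ - 1) :=
  watermark_kl_bound_general (fun k => (hp0 k).le) hp1 hγ hD hw
end

section
/- Let N ≥ 1 be a natural number, γ ∈ ℝ with 0 < γ < 1, and δ ≥ 0 with γ·(exp(δ) - 1) ≤ 1. Define the per-token green-list hit probability under watermarking p' = γ·exp(δ) / (1 + γ·(exp(δ) - 1)). Then the expected detection advantage satisfies (N·p' - N·γ) / √(N·γ·(1-γ)) ≥ (δ/2)·√(N·γ·(1-γ)). -/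
/-- The success probability of a Bernoulli variable of parameter `γ` after exponential tilting by
`δ`, that is, after its odds `γ / (1 - γ)` are multiplied by `exp δ`. This is the green-list hit
probability under watermarking. The normalizer `(1 - γ) + γ * exp δ` is written as
`1 + γ * (exp δ - 1)`. -/
noncomputable def tiltedProb (γ δ : ℝ) : ℝ :=
  γ * Real.exp δ / (1 + γ * (Real.exp δ - 1))

theorem one_add_mul_exp_sub_one_pos {γ : ℝ} (hγ : γ ∈ Set.Icc 0 1) (δ : ℝ) :
    0 < 1 + γ * (Real.exp δ - 1) :=
  (convex_Ioi (0 : ℝ)).add_smul_sub_mem (Set.mem_Ioi.mpr one_pos) (Real.exp_pos δ) hγ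

theorem tiltedProb_sub_self {γ δ : ℝ} (hZ : 1 + γ * (Real.exp δ - 1) ≠ 0) :
    tiltedProb γ δ - γ =
      (Real.exp δ - 1) / (1 + γ * (Real.exp δ - 1)) * (γ * (1 - γ)) := by
  rw [tiltedProb]
  field_simp
  ring

theorem div_mul_variance_le_tiltedProb_sub_self {γ : ℝ} (hγ : γ ∈ Set.Icc 0 1) (δ : ℝ) :
    δ / (1 + γ * (Real.exp δ - 1)) * (γ * (1 - γ)) ≤ tiltedProb γ δ - γ := by
  have hZ := one_add_mul_exp_sub_one_pos hγ δ
  have hvar : 0 ≤ γ * (1 - γ) := mul_nonneg hγ.1 (sub_nonneg.mpr hγ.2)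
  have hexp : δ ≤ Real.exp δ - 1 := le_sub_iff_add_le.mpr (Real.add_one_le_exp δ)
  rw [tiltedProb_sub_self hZ.ne']
  gcongr

theorem mul_sqrt_le_div_sqrt_iff {v : ℝ} (hv : 0 < v) (c x : ℝ) :
    c * √v ≤ x / √v ↔ c * v ≤ x := by
  rw [le_div_iff₀ (Real.sqrt_pos.mpr hv), mul_assoc, Real.mul_self_sqrt hv.le]

theorem detection_advantage_general {N : ℕ} (hN : 1 ≤ N) {γ : ℝ} (hγ0 : 0 < γ) (hγ1 : γ < 1)
    (δ : ℝ) :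
    δ / (1 + γ * (Real.exp δ - 1)) * √(N * γ * (1 - γ)) ≤
      (N * tiltedProb γ δ - N * γ) / √(N * γ * (1 - γ)) := by
  have hvar : 0 < N * γ * (1 - γ) :=
    mul_pos (mul_pos (Nat.cast_pos.mpr hN) hγ0) (sub_pos.mpr hγ1)
  rw [mul_sqrt_le_div_sqrt_iff hvar]
  calc δ / (1 + γ * (Real.exp δ - 1)) * (N * γ * (1 - γ))
      = N * (δ / (1 + γ * (Real.exp δ - 1)) * (γ * (1 - γ))) := by ring
    _ ≤ N * (tiltedProb γ δ - γ) := by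
      gcongr
      exact div_mul_variance_le_tiltedProb_sub_self ⟨hγ0.le, hγ1.le⟩ δ
    _ = N * tiltedProb γ δ - N * γ := mul_sub _ _ _

/-- Detection advantage: the expected Z-score gap between the watermarked and
null hypotheses is at least `(δ/2)·√(N·γ·(1-γ))`. -/
theorem detection_advantage (N : ℕ) (hN : 1 ≤ N) (γ δ : ℝ)
    (hγ0 : 0 < γ) (hγ1 : γ < 1) (hδ : 0 ≤ δ)
    (h : γ * (Real.exp δ - 1) ≤ 1)
    (p' : ℝ) (hp' : p' = γ * Real.exp δ / (1 + γ * (Real.exp δ - 1))) :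
    (δ / 2) * Real.sqrt (N * γ * (1 - γ))
      ≤ (N * p' - N * γ) / Real.sqrt (N * γ * (1 - γ)) := by
  have hZ := one_add_mul_exp_sub_one_pos ⟨hγ0.le, hγ1.le⟩ δ
  have hrate : δ / 2 ≤ δ / (1 + γ * (Real.exp δ - 1)) := by gcongr; linarith
  rw [hp']
  exact (mul_le_mul_of_nonneg_right hrate (Real.sqrt_nonneg _)).trans
    (detection_advantage_general hN hγ0 hγ1 δ)
end

section
/- Let n be a natural number, p ∈ ℝ with 0 ≤ p ≤ 1, and ε ∈ ℝ with 0 ≤ ε ≤ 1. If X is a binomial random variable with parameters n and p, then the lower-tail probability satisfies the Chernoff bound P(X ≤ (1-ε)·n·p) = ∑_{k ≤ ⌊(1-ε)·n·p⌋} (n choose k)·p^k·(1-p)^{n-k} ≤ exp(-ε²·n·p / 2). -/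
/-! Markov's inequality for `exp (-ε X)` gives
`P(X ≤ (1 - ε)np) ≤ exp (ε(1 - ε)np) * 𝔼[exp (-ε X)]`. The expectation is
`(1 - p + p * exp (-ε)) ^ n`, which `exp (-ε) ≤ 1 - ε + ε² / 2` and `1 + x ≤ exp x` bound by
`exp (np(-ε + ε² / 2))`. Taking `ε` itself as the parameter, instead of the optimal
`-log (1 - ε)`, loses nothing in the stated bound and covers `ε = 1`. -/

section BinomialTail

open MeasureTheory ProbabilityTheory
open scoped unitInterval

theorem exp_neg_le_one_sub_add_sq_div_two {x : ℝ} (hx : 0 ≤ x) :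
    Real.exp (-x) ≤ 1 - x + x ^ 2 / 2 := by
  have hprod : 1 ≤ (1 - x + x ^ 2 / 2) * (1 + x + x ^ 2 / 2) :=
    calc 1 ≤ 1 + (x ^ 2 / 2) ^ 2 := le_add_of_nonneg_right (sq_nonneg _)
      _ = (1 - x + x ^ 2 / 2) * (1 + x + x ^ 2 / 2) := by ring
  calc Real.exp (-x) = (Real.exp x)⁻¹ := Real.exp_neg x
    _ ≤ (1 + x + x ^ 2 / 2)⁻¹ := by
      gcongr
      exact Real.quadratic_le_exp_of_nonneg hx
    _ ≤ 1 - x + x ^ 2 / 2 := by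
      rwa [inv_le_iff_one_le_mul₀ (by positivity)]

variable (n : ℕ) (p : I)

theorem binomial_real_setOf_natCast_le {a : ℝ} (ha : 0 ≤ a) :
    Bin(n, p).real {k | (k : ℝ) ≤ a} =
      ∑ k ∈ Finset.range (⌊a⌋₊ + 1), (n.choose k : ℝ) * p ^ k * (1 - p) ^ (n - k) := by
  have hset : {k : ℕ | (k : ℝ) ≤ a} = Finset.range (⌊a⌋₊ + 1) := by
    ext k
    simp [Order.lt_add_one_iff, Nat.le_floor_iff ha]
  simp only [hset, ← sum_measureReal_singleton, binomial_real_singleton]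

theorem mgf_natCast_binomial (t : ℝ) :
    mgf (fun k : ℕ ↦ (k : ℝ)) Bin(n, p) t = (1 - p + p * Real.exp t) ^ n := by
  rw [mgf, integral_binomial, add_comm (1 - (p : ℝ)), add_pow, ← Nat.range_succ_eq_Iic]
  refine Finset.sum_congr rfl fun k _ ↦ ?_
  rw [mul_comm t, Real.exp_nat_mul, smul_eq_mul]
  ring

theorem mgf_natCast_binomial_neg_le_exp {t : ℝ} (ht : 0 ≤ t) :
    mgf (fun k : ℕ ↦ (k : ℝ)) Bin(n, p) (-t) ≤ Real.exp (n * p * (-t + t ^ 2 / 2)) := by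
  have hp₀ : 0 ≤ (p : ℝ) := p.2.1
  have hp₁ : 0 ≤ 1 - (p : ℝ) := sub_nonneg.2 p.2.2
  have hbase : 1 - p + p * Real.exp (-t) ≤ Real.exp (p * (-t + t ^ 2 / 2)) :=
    calc 1 - p + p * Real.exp (-t)
        ≤ 1 - p + p * (1 - t + t ^ 2 / 2) := by
          gcongr
          exact exp_neg_le_one_sub_add_sq_div_two ht
      _ = p * (-t + t ^ 2 / 2) + 1 := by ring
      _ ≤ Real.exp (p * (-t + t ^ 2 / 2)) := Real.add_one_le_exp _
  calc mgf (fun k : ℕ ↦ (k : ℝ)) Bin(n, p) (-t)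
      = (1 - p + p * Real.exp (-t)) ^ n := mgf_natCast_binomial n p (-t)
    _ ≤ Real.exp (p * (-t + t ^ 2 / 2)) ^ n := by gcongr
    _ = Real.exp (n * p * (-t + t ^ 2 / 2)) := by rw [← Real.exp_nat_mul, mul_assoc]

theorem binomial_real_setOf_le_one_sub_mul_le_exp {ε : ℝ} (hε : 0 ≤ ε) :
    Bin(n, p).real {k | (k : ℝ) ≤ (1 - ε) * n * p} ≤ Real.exp (-(ε ^ 2) * n * p / 2) :=
  calc Bin(n, p).real {k | (k : ℝ) ≤ (1 - ε) * n * p}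
      ≤ Real.exp (-(-ε) * ((1 - ε) * n * p)) * mgf (fun k : ℕ ↦ (k : ℝ)) Bin(n, p) (-ε) :=
        measure_le_le_exp_mul_mgf _ (neg_nonpos.2 hε) (integrable_binomial _)
    _ ≤ Real.exp (-(-ε) * ((1 - ε) * n * p)) * Real.exp (n * p * (-ε + ε ^ 2 / 2)) := by
        gcongr
        exact mgf_natCast_binomial_neg_le_exp n p hε
    _ = Real.exp (-(ε ^ 2) * n * p / 2) := by
        rw [← Real.exp_add]
        ring_nf

end BinomialTail

/-- Multiplicative Chernoff lower-tail bound for the binomial distribution: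
`P(X ≤ (1-ε)·n·p) ≤ exp(-ε²·n·p/2)`. -/
theorem binomial_chernoff_lower_tail (n : ℕ) (p ε : ℝ)
    (hp0 : 0 ≤ p) (hp1 : p ≤ 1) (hε0 : 0 ≤ ε) (hε1 : ε ≤ 1) :
    ∑ k ∈ Finset.range (⌊(1 - ε) * n * p⌋₊ + 1),
        (n.choose k : ℝ) * p ^ k * (1 - p) ^ (n - k)
      ≤ Real.exp (-(ε ^ 2) * n * p / 2) := by
  have hthreshold : 0 ≤ (1 - ε) * n * p :=
    mul_nonneg (mul_nonneg (sub_nonneg.2 hε1) n.cast_nonneg) hp0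
  lift p to unitInterval using ⟨hp0, hp1⟩
  rw [← binomial_real_setOf_natCast_le n p hthreshold]
  exact binomial_real_setOf_le_one_sub_mul_le_exp n p hε0
end
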